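/- Parallel composition subdistributes over nondeterministic choice with respect to simulation: for probabilistic automata P, Q, R with pairwise disjoint state spaces and any frame A ⊆ E, P ∥_A Q + P ∥_A R ≤ P ∥_A (Q + R) (where on the left the two occurrences of P are taken as disjoint copies). -/

import Mathlib

open scoped ENNReal

namespace PCKA

/-- A probabilistic automaton over the (non-silent) action alphabet `α`, with state
space `σ`.  Transition labels are `Option α`, where `none` plays the role of the
silent action `τ`; `trans x a μ` means `x —a→ μ` where `μ` is a (countably
supported) probability distribution over states, `init` is the initial
distribution and `final` the set of final states. -/
structure PAut (α : Type) (σ : Type) where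
  trans : σ → Option α → PMF σ → Prop
  init : PMF σ
  final : Set σ

/-- The lifting `S̄ ⊆ D(X) × D(Y)` of a relation `S ⊆ X × D(Y)`: `μ S̄ ν` iff there
are weights `p n` summing to `1`, states `x n` and distributions `νs n` with
`μ = Σ_n p n · δ_{x n}`, `x n S νs n` for each `n`, and `ν = Σ_n p n · νs n`. -/
def Lift {X Y : Type} (S : X → PMF Y → Prop) (μ : PMF X) (ν : PMF Y) : Prop :=
  ∃ (p : ℕ → ℝ≥0∞) (x : ℕ → X) (νs : ℕ → PMF Y),
    (∑' n, p n) = 1 ∧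
    (∀ s, μ s = ∑' n, p n * (PMF.pure (x n)) s) ∧
    (∀ n, S (x n) (νs n)) ∧
    (∀ t, ν t = ∑' n, p n * (νs n) t)

/-- The double lifting `T̿ ⊆ D(X) × D(Z)` of a relation `T ⊆ X × Z`, via a weight
function `w`. -/
def DLift {X Z : Type} (T : X → Z → Prop) (μ : PMF X) (ψ : PMF Z) : Prop :=
  ∃ w : X → Z → ℝ≥0∞,
    (∀ x z, 0 < w x z → T x z) ∧
    (∀ x, (∑' z, w x z) = μ x) ∧
    (∀ z, (∑' x, w x z) = ψ z)

/-- Flattening `π : D(D(Y)) → D(Y)`, `π(ψ) = Σ_{ν} ψ(ν)·ν`. -/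
noncomputable def flat {Y : Type} (ψ : PMF (PMF Y)) : PMF Y := ψ.bind id

/-- Single transition step, with the τ-transitions extended by reflexivity
(`x —τ→ δ_x` is always allowed). -/
def step {α σ : Type} (P : PAut α σ) (a : Option α) (x : σ) (μ : PMF σ) : Prop :=
  P.trans x a μ ∨ (a = none ∧ μ = PMF.pure x)

/-- Weak internal moves `⇒`: the reflexive-transitive closure of the lifted
(extended) τ-transition relation on distributions. -/
def WeakTau {α σ : Type} (P : PAut α σ) : PMF σ → PMF σ → Prop :=
  Relation.ReflTransGen (Lift (step P none))

/-- Weak `a`-transition `μ ⇒^a μ'`: `μ ⇒ μ₁ —ā→ μ₂ ⇒ μ'`. -/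
def WeakStep {α σ : Type} (P : PAut α σ) (a : Option α) (μ μ' : PMF σ) : Prop :=
  ∃ μ₁ μ₂, WeakTau P μ μ₁ ∧ Lift (step P a) μ₁ μ₂ ∧ WeakTau P μ₂ μ'

/-- A probabilistic simulation from `P` to `Q` (Deng et al. style). -/
structure IsSimulation {α σ τ' : Type} (P : PAut α σ) (Q : PAut α τ')
    (S : σ → PMF τ' → Prop) : Prop where
  init : ∃ ν₀', WeakTau Q Q.init ν₀' ∧ Lift S P.init ν₀'
  step : ∀ x a μ', P.trans x a μ' → ∀ ν, S x ν →
    ∃ ν', WeakStep Q a ν ν' ∧ Lift S μ' ν'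
  final : ∀ x ν, x ∈ P.final → S x ν →
    ∃ ν', WeakTau Q ν ν' ∧ ∀ y ∈ ν'.support, y ∈ Q.final

/-- A probabilistic weak forward simulation from `P` to `Q` (Segala style). -/
structure IsWFSimulation {α σ τ' : Type} (P : PAut α σ) (Q : PAut α τ')
    (S : σ → PMF τ' → Prop) : Prop where
  init : ∃ ψ₀ : PMF (PMF τ'), DLift S P.init ψ₀ ∧ WeakTau Q Q.init (flat ψ₀)
  step : ∀ x a μ', P.trans x a μ' → ∀ ν, S x ν →
    ∃ ψ : PMF (PMF τ'), WeakStep Q a ν (flat ψ) ∧ DLift S μ' ψ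
  final : ∀ x ν, x ∈ P.final → S x ν →
    ∃ ψ : PMF (PMF τ'), (∀ ρ ∈ ψ.support, ∀ y ∈ ρ.support, y ∈ Q.final) ∧
      WeakTau Q ν (flat ψ)

/-- `P ≤ Q`: there exists a probabilistic simulation from `P` to `Q`. -/
def Sim {α σ τ' : Type} (P : PAut α σ) (Q : PAut α τ') : Prop :=
  ∃ S, IsSimulation P Q S

/-- Simulation equivalence `P ≡ Q`. -/
def SimEquiv {α σ τ' : Type} (P : PAut α σ) (Q : PAut α τ') : Prop :=
  Sim P Q ∧ Sim Q P

/-- Convex combination `p·μ + (1−p)·ν` of two distributions. -/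
noncomputable def mix {X : Type} (p : ℝ≥0∞) (hp : p ≤ 1) (μ ν : PMF X) : PMF X :=
  ⟨fun x => p * μ x + (1 - p) * ν x, by
    refine ENNReal.summable.hasSum_iff.mpr ?_
    rw [ENNReal.tsum_add, ENNReal.tsum_mul_left, ENNReal.tsum_mul_left,
      μ.tsum_coe, ν.tsum_coe, mul_one, mul_one, add_tsub_cancel_of_le hp]⟩

/-- Product distribution `μ × ν`, with `(μ × ν)(x,y) = μ(x)·ν(y)`. -/
noncomputable def pprod {X Y : Type} (μ : PMF X) (ν : PMF Y) : PMF (X × Y) :=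
  μ.bind fun x => ν.map fun y => (x, y)

/-- The skip automaton `1`: one state, no transitions, that state is final. -/
noncomputable def skip (α : Type) : PAut α Unit :=
  ⟨fun _ _ _ => False, PMF.pure (), Set.univ⟩

/-- The deadlock automaton `0`: one state, no transitions, no final state. -/
noncomputable def deadlock (α : Type) : PAut α Unit :=
  ⟨fun _ _ _ => False, PMF.pure (), ∅⟩

/-- Nondeterministic choice `P + Q`: disjoint union of the two automata (realised
by the sum type) plus a fresh initial state `z = none` with `z —τ→ μ₀` and
`z —τ→ ν₀`. -/
noncomputable def nchoice {α σ τ' : Type} (P : PAut α σ) (Q : PAut α τ') :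
    PAut α (Option (σ ⊕ τ')) where
  trans := fun s a μ =>
    match s with
    | none => a = none ∧
        (μ = P.init.map (fun x => some (Sum.inl x)) ∨
         μ = Q.init.map (fun y => some (Sum.inr y)))
    | some (Sum.inl x) => ∃ μ', P.trans x a μ' ∧ μ = μ'.map (fun x => some (Sum.inl x))
    | some (Sum.inr y) => ∃ ν', Q.trans y a ν' ∧ μ = ν'.map (fun y => some (Sum.inr y))
  init := PMF.pure none
  final := {s | (∃ x ∈ P.final, s = some (Sum.inl x)) ∨ (∃ y ∈ Q.final, s = some (Sum.inr y))}

/-- Sequential composition `P · Q`: disjoint union (realised by the sum type),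
with a τ-transition from each final state of `P` to the initial distribution of
`Q`; initial distribution that of `P`, final states those of `Q`. -/
noncomputable def pseq {α σ τ' : Type} (P : PAut α σ) (Q : PAut α τ') :
    PAut α (σ ⊕ τ') where
  trans := fun s a μ =>
    match s with
    | Sum.inl x =>
        (∃ μ', P.trans x a μ' ∧ μ = μ'.map Sum.inl) ∨
        (a = none ∧ x ∈ P.final ∧ μ = Q.init.map Sum.inr)
    | Sum.inr y => ∃ ν', Q.trans y a ν' ∧ μ = ν'.map Sum.inr
  init := P.init.map Sum.inl
  final := {s | ∃ y ∈ Q.final, s = Sum.inr y}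

/-- Kleene star `P*`: a fresh state `z = none` which is initial and the only
final state, with `z —τ→ μ₀` and `x —τ→ δ_z` for each final state `x` of `P`. -/
noncomputable def pstar {α σ : Type} (P : PAut α σ) : PAut α (Option σ) where
  trans := fun s a μ =>
    match s with
    | none => a = none ∧ μ = P.init.map some
    | some x =>
        (∃ μ', P.trans x a μ' ∧ μ = μ'.map some) ∨
        (a = none ∧ x ∈ P.final ∧ μ = PMF.pure none)
  init := PMF.pure none
  final := {none}

/-- Probabilistic choice `P ⊕_p Q`: disjoint union with initial distribution
`p·μ₀ + (1−p)·ν₀`. -/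
noncomputable def pchoice {α σ τ' : Type} (p : ℝ≥0∞) (hp : p ≤ 1)
    (P : PAut α σ) (Q : PAut α τ') : PAut α (σ ⊕ τ') where
  trans := fun s a μ =>
    match s with
    | Sum.inl x => ∃ μ', P.trans x a μ' ∧ μ = μ'.map Sum.inl
    | Sum.inr y => ∃ ν', Q.trans y a ν' ∧ μ = ν'.map Sum.inr
  init := mix p hp (P.init.map Sum.inl) (Q.init.map Sum.inr)
  final := {s | (∃ x ∈ P.final, s = Sum.inl x) ∨ (∃ y ∈ Q.final, s = Sum.inr y)}

/-- CSP-style parallel composition `P ∥_A Q` synchronising on the frame `A`: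
actions in `A` must be performed jointly, all other actions (including τ) are
interleaved. -/
noncomputable def par {α σ τ' : Type} (A : Set α) (P : PAut α σ) (Q : PAut α τ') :
    PAut α (σ × τ') where
  trans := fun s a μπ => ∃ μ ν, μπ = pprod μ ν ∧
    ((∃ b ∈ A, a = some b ∧ P.trans s.1 a μ ∧ Q.trans s.2 a ν) ∨
     ((∀ b ∈ A, a ≠ some b) ∧ P.trans s.1 a μ ∧ ν = PMF.pure s.2) ∨
     ((∀ b ∈ A, a ≠ some b) ∧ Q.trans s.2 a ν ∧ μ = PMF.pure s.1))
  init := pprod P.init Q.init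
  final := {s | s.1 ∈ P.final ∧ s.2 ∈ Q.final}

/-!
With respect to simulation, `P + Q` is a least upper bound of `P` and `Q`, and `∥_A` is monotone
in both arguments. Hence `P ∥_A Q` and `P ∥_A R` both lie below `P ∥_A (Q + R)`, and so does
their choice.
-/

section ProductDistribution

variable {X Y X' Y' : Type}

theorem pprod_pure_pure (x : X) (y : Y) :
    pprod (PMF.pure x) (PMF.pure y) = PMF.pure (x, y) := by
  rw [pprod, PMF.pure_bind, PMF.pure_map]

theorem pprod_bind_bind (μ : PMF X) (ν : PMF Y) (f : X → PMF X') (g : Y → PMF Y') :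
    pprod (μ.bind f) (ν.bind g) = (pprod μ ν).bind fun z => pprod (f z.1) (g z.2) := by
  simp only [pprod, PMF.bind_bind, PMF.map_bind, PMF.bind_map, Function.comp_def]
  congr! 2 with x
  exact PMF.bind_comm _ _ _

theorem pprod_map_map (μ : PMF X) (ν : PMF Y) (f : X → X') (g : Y → Y') :
    pprod (μ.map f) (ν.map g) = (pprod μ ν).map (Prod.map f g) := by
  simp only [PMF.map, pprod_bind_bind, Function.comp_apply, pprod_pure_pure]
  rfl

theorem mem_support_pprod {μ : PMF X} {ν : PMF Y} {z : X × Y} :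
    z ∈ (pprod μ ν).support ↔ z.1 ∈ μ.support ∧ z.2 ∈ ν.support := by
  obtain ⟨x, y⟩ := z
  simp [pprod, and_comm]

end ProductDistribution

section Lifting

theorem map_eq_self_of_forall_mem_support {ι : Type*} {μ : PMF ι} {f : ι → ι}
    (hf : ∀ i ∈ μ.support, f i = i) : μ.map f = μ := by
  classical
  ext j
  rw [PMF.map_apply, tsum_eq_single j]
  · by_cases hj : j ∈ μ.support
    · rw [hf j hj, if_pos rfl]
    · rw [(μ.apply_eq_zero_iff j).2 hj, ite_self]
  · intro i hij
    by_cases hi : i ∈ μ.support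
    · rw [hf i hi, if_neg hij.symm]
    · rw [(μ.apply_eq_zero_iff i).2 hi, ite_self]

theorem exists_pmf_nat_map_eq {ι : Type*} (μ : PMF ι) :
    ∃ (p : PMF ℕ) (k : ℕ → ι), p.map k = μ ∧ ∀ n, k n ∈ μ.support := by
  obtain ⟨k, hk⟩ := μ.support_countable.exists_eq_range μ.support_nonempty
  have : Nonempty ι := ⟨k 0⟩
  refine ⟨μ.map (Function.invFun k), k, ?_, fun n => hk ▸ Set.mem_range_self n⟩
  rw [PMF.map_comp]
  exact map_eq_self_of_forall_mem_support fun _ hi => Function.invFun_eq (hk.subset hi)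

variable {X Y Z X' Y' : Type} {S : X → PMF Y → Prop}

theorem lift_iff_exists_pmf {μ : PMF X} {ν : PMF Y} :
    Lift S μ ν ↔ ∃ (p : PMF ℕ) (x : ℕ → X) (νs : ℕ → PMF Y),
      μ = p.map x ∧ ν = p.bind νs ∧ ∀ n, S (x n) (νs n) := by
  constructor
  · rintro ⟨p, x, νs, hp, hμ, hS, hν⟩
    exact ⟨⟨p, hp ▸ ENNReal.summable.hasSum⟩, x, νs, PMF.ext hμ, PMF.ext hν, hS⟩
  · rintro ⟨p, x, νs, rfl, rfl, hS⟩
    exact ⟨p, x, νs, p.tsum_coe, fun _ => rfl, hS, fun _ => rfl⟩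

theorem lift_map_bind {ι : Type*} (μ : PMF ι) {g : ι → X} {f : ι → PMF Y}
    (h : ∀ i ∈ μ.support, S (g i) (f i)) : Lift S (μ.map g) (μ.bind f) := by
  obtain ⟨p, k, hpk, hk⟩ := exists_pmf_nat_map_eq μ
  refine lift_iff_exists_pmf.2 ⟨p, g ∘ k, f ∘ k, ?_, ?_, fun n => h _ (hk n)⟩
  · rw [← PMF.map_comp, hpk]
  · rw [← PMF.bind_map, hpk]

theorem lift_pure {x : X} {ν : PMF Y} (h : S x ν) : Lift S (PMF.pure x) ν := by
  simpa only [PMF.pure_map, PMF.pure_bind] using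
    lift_map_bind (PMF.pure ()) (g := fun _ => x) (f := fun _ => ν) fun _ _ => h

theorem lift_map_right (μ : PMF X) {f : X → Y} (h : ∀ x, S x (PMF.pure (f x))) :
    Lift S μ (μ.map f) := by
  have hlift : Lift S (μ.map id) (μ.map f) := lift_map_bind μ fun x _ => h x
  rwa [PMF.map_id] at hlift

theorem lift_self {S : X → PMF X → Prop} (h : ∀ x, S x (PMF.pure x)) (μ : PMF X) :
    Lift S μ μ := by
  simpa only [PMF.map_id] using lift_map_right μ (f := id) h

theorem Lift.map_left {T : Z → PMF Y → Prop} {μ : PMF X} {ν : PMF Y} (h : Lift S μ ν)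
    {f : X → Z} (hST : ∀ x ξ, S x ξ → T (f x) ξ) : Lift T (μ.map f) ν := by
  obtain ⟨p, x, νs, rfl, rfl, hS⟩ := lift_iff_exists_pmf.1 h
  exact lift_iff_exists_pmf.2 ⟨p, f ∘ x, νs, PMF.map_comp .., rfl, fun n => hST _ _ (hS n)⟩

theorem Lift.prod {T : X' → PMF Y' → Prop} {U : X × X' → PMF (Y × Y') → Prop}
    {μ : PMF X} {ν : PMF Y} {μ' : PMF X'} {ν' : PMF Y'} (h : Lift S μ ν) (h' : Lift T μ' ν')
    (hU : ∀ x ξ x' ξ', S x ξ → T x' ξ' → U (x, x') (pprod ξ ξ')) :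
    Lift U (pprod μ μ') (pprod ν ν') := by
  obtain ⟨p, x, νs, rfl, rfl, hS⟩ := lift_iff_exists_pmf.1 h
  obtain ⟨p', x', νs', rfl, rfl, hT⟩ := lift_iff_exists_pmf.1 h'
  rw [pprod_map_map, pprod_bind_bind]
  exact lift_map_bind _ fun n _ => hU _ _ _ _ (hS n.1) (hT n.2)

end Lifting

section Simulation

variable {α σ τ : Type} {P : PAut α σ} {Q : PAut α τ}

theorem WeakTau.weakStep {μ ν : PMF σ} (h : WeakTau P μ ν) : WeakStep P none μ ν :=
  ⟨ν, ν, h, lift_self (fun _ => Or.inr ⟨rfl, rfl⟩) ν, .refl⟩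

theorem weakStep_pure {a : Option α} {x : σ} {μ : PMF σ} (h : P.trans x a μ) :
    WeakStep P a (PMF.pure x) μ :=
  ⟨_, _, .refl, lift_pure (Or.inl h), .refl⟩

theorem sim_of_map (f : σ → τ) (init : WeakTau Q Q.init (P.init.map f))
    (trans : ∀ x a μ, P.trans x a μ → Q.trans (f x) a (μ.map f))
    (final : ∀ x ∈ P.final, f x ∈ Q.final) : Sim P Q := by
  refine ⟨fun x ν => ν = PMF.pure (f x), ⟨_, init, lift_map_right _ fun _ => rfl⟩, ?_, ?_⟩
  · rintro x a μ h _ rfl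
    exact ⟨μ.map f, weakStep_pure (trans x a μ h), lift_map_right μ fun _ => rfl⟩
  · rintro x _ hx rfl
    refine ⟨_, .refl, fun y hy => ?_⟩
    rw [(PMF.mem_support_pure_iff _ _).1 hy]
    exact final x hx

theorem Sim.refl (P : PAut α σ) : Sim P P :=
  sim_of_map id (by rw [PMF.map_id]; exact .refl)
    (fun x a μ h => by rwa [PMF.map_id]) fun _ hx => hx

end Simulation

section Choice

variable {α σ₁ σ₂ τ : Type}

theorem sim_nchoice_left (P : PAut α σ₁) (Q : PAut α σ₂) : Sim P (nchoice P Q) :=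
  sim_of_map (fun x => some (Sum.inl x)) (.single (lift_pure (Or.inl ⟨rfl, Or.inl rfl⟩)))
    (fun _ _ μ h => ⟨μ, h, rfl⟩) fun x hx => Or.inl ⟨x, hx, rfl⟩

theorem sim_nchoice_right (P : PAut α σ₁) (Q : PAut α σ₂) : Sim Q (nchoice P Q) :=
  sim_of_map (fun y => some (Sum.inr y)) (.single (lift_pure (Or.inl ⟨rfl, Or.inr rfl⟩)))
    (fun _ _ ν h => ⟨ν, h, rfl⟩) fun y hy => Or.inr ⟨y, hy, rfl⟩

/-- The copairing of two relations `S` and `T` into the distributions of a common target: the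
relation out of the states of a nondeterministic choice that relates its fresh initial state
`none` to `ν₀` only. -/
def choiceRel (S : σ₁ → PMF τ → Prop) (T : σ₂ → PMF τ → Prop) (ν₀ : PMF τ) :
    Option (σ₁ ⊕ σ₂) → PMF τ → Prop
  | none, ν => ν = ν₀
  | some (Sum.inl x), ν => S x ν
  | some (Sum.inr y), ν => T y ν

variable {P : PAut α σ₁} {Q : PAut α σ₂} {R : PAut α τ}

theorem IsSimulation.choiceRel {S : σ₁ → PMF τ → Prop} {T : σ₂ → PMF τ → Prop}
    (hS : IsSimulation P R S) (hT : IsSimulation Q R T) :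
    IsSimulation (nchoice P Q) R (choiceRel S T R.init) where
  init := ⟨R.init, .refl, lift_pure rfl⟩
  step := by
    rintro (_ | x | y) a _ h ν hν
    · obtain ⟨rfl, rfl | rfl⟩ := h <;> obtain rfl := hν
      · obtain ⟨ν₀, hweak, hlift⟩ := hS.init
        exact ⟨ν₀, hweak.weakStep, hlift.map_left fun _ _ h => h⟩
      · obtain ⟨ν₀, hweak, hlift⟩ := hT.init
        exact ⟨ν₀, hweak.weakStep, hlift.map_left fun _ _ h => h⟩
    · obtain ⟨μ, hμ, rfl⟩ := h
      obtain ⟨ν', hweak, hlift⟩ := hS.step x a μ hμ ν hν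
      exact ⟨ν', hweak, hlift.map_left fun _ _ h => h⟩
    · obtain ⟨μ, hμ, rfl⟩ := h
      obtain ⟨ν', hweak, hlift⟩ := hT.step y a μ hμ ν hν
      exact ⟨ν', hweak, hlift.map_left fun _ _ h => h⟩
  final := by
    rintro _ ν (⟨x, hx, rfl⟩ | ⟨y, hy, rfl⟩) hν
    · exact hS.final x ν hx hν
    · exact hT.final y ν hy hν

theorem nchoice_sim : Sim P R → Sim Q R → Sim (nchoice P Q) R
  | ⟨_, hS⟩, ⟨_, hT⟩ => ⟨_, hS.choiceRel hT⟩

end Choice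

section Parallel

variable {α σ₁ σ₂ τ₁ τ₂ : Type} {A : Set α} {P : PAut α σ₁} {Q : PAut α σ₂}
  {a : Option α} {μ μ' : PMF σ₁} {ν ν' : PMF σ₂}

theorem lift_step_par_sync {b : α} (hb : b ∈ A) (hμ : Lift (step P (some b)) μ μ')
    (hν : Lift (step Q (some b)) ν ν') :
    Lift (step (par A P Q) (some b)) (pprod μ ν) (pprod μ' ν') := by
  refine hμ.prod hν fun x ξ y ζ hx hy => ?_
  simp only [step, reduceCtorEq, false_and, or_false] at hx hy
  exact Or.inl ⟨ξ, ζ, rfl, Or.inl ⟨b, hb, rfl, hx, hy⟩⟩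

theorem lift_step_par_left (ha : ∀ b ∈ A, a ≠ some b) (hμ : Lift (step P a) μ μ') :
    Lift (step (par A P Q) a) (pprod μ ν) (pprod μ' ν) := by
  refine hμ.prod (lift_self (S := fun y ζ => ζ = PMF.pure y) (fun _ => rfl) ν) ?_
  rintro x ξ y _ (hx | ⟨rfl, rfl⟩) rfl
  · exact Or.inl ⟨ξ, _, rfl, Or.inr (Or.inl ⟨ha, hx, rfl⟩)⟩
  · exact Or.inr ⟨rfl, pprod_pure_pure x y⟩

theorem lift_step_par_right (ha : ∀ b ∈ A, a ≠ some b) (hν : Lift (step Q a) ν ν') :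
    Lift (step (par A P Q) a) (pprod μ ν) (pprod μ ν') := by
  refine (lift_self (S := fun x ξ => ξ = PMF.pure x) (fun _ => rfl) μ).prod hν ?_
  rintro x _ y ζ rfl (hy | ⟨rfl, rfl⟩)
  · exact Or.inl ⟨_, ζ, rfl, Or.inr (Or.inr ⟨ha, hy, rfl⟩)⟩
  · exact Or.inr ⟨rfl, pprod_pure_pure x y⟩

theorem WeakTau.par_left (hμ : WeakTau P μ μ') :
    WeakTau (par A P Q) (pprod μ ν) (pprod μ' ν) :=
  Relation.ReflTransGen.lift (pprod · ν) (fun _ _ => lift_step_par_left (by simp)) _ _ hμ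

theorem WeakTau.par_right (hν : WeakTau Q ν ν') :
    WeakTau (par A P Q) (pprod μ ν) (pprod μ ν') :=
  Relation.ReflTransGen.lift (pprod μ ·) (fun _ _ => lift_step_par_right (by simp)) _ _ hν

theorem WeakTau.par_par (hμ : WeakTau P μ μ') (hν : WeakTau Q ν ν') :
    WeakTau (par A P Q) (pprod μ ν) (pprod μ' ν') :=
  hμ.par_left.trans hν.par_right

theorem WeakStep.par_sync {b : α} (hb : b ∈ A) :
    WeakStep P (some b) μ μ' → WeakStep Q (some b) ν ν' →
      WeakStep (par A P Q) (some b) (pprod μ ν) (pprod μ' ν')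
  | ⟨_, _, hμ₁, hμ₂, hμ₃⟩, ⟨_, _, hν₁, hν₂, hν₃⟩ =>
    ⟨_, _, hμ₁.par_par hν₁, lift_step_par_sync hb hμ₂ hν₂, hμ₃.par_par hν₃⟩

theorem WeakStep.par_left (ha : ∀ b ∈ A, a ≠ some b) :
    WeakStep P a μ μ' → WeakStep (par A P Q) a (pprod μ ν) (pprod μ' ν)
  | ⟨_, _, h₁, h₂, h₃⟩ => ⟨_, _, h₁.par_left, lift_step_par_left ha h₂, h₃.par_left⟩

theorem WeakStep.par_right (ha : ∀ b ∈ A, a ≠ some b) :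
    WeakStep Q a ν ν' → WeakStep (par A P Q) a (pprod μ ν) (pprod μ ν')
  | ⟨_, _, h₁, h₂, h₃⟩ => ⟨_, _, h₁.par_right, lift_step_par_right ha h₂, h₃.par_right⟩

/-- The product of two relations `S` and `T` between states and distributions: it relates a pair
of states to the product distributions whose factors are related componentwise, and is the
simulation between parallel compositions induced by simulations `S` and `T`. -/
def prodRel (S : σ₁ → PMF τ₁ → Prop) (T : σ₂ → PMF τ₂ → Prop) :
    σ₁ × σ₂ → PMF (τ₁ × τ₂) → Prop :=
  fun z ρ => ∃ ξ ζ, S z.1 ξ ∧ T z.2 ζ ∧ ρ = pprod ξ ζ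

variable {S : σ₁ → PMF τ₁ → Prop} {T : σ₂ → PMF τ₂ → Prop}
  {P' : PAut α τ₁} {Q' : PAut α τ₂}

theorem Lift.prodRel {ξ : PMF τ₁} {ζ : PMF τ₂} (hμ : Lift S μ ξ) (hν : Lift T ν ζ) :
    Lift (prodRel S T) (pprod μ ν) (pprod ξ ζ) :=
  hμ.prod hν fun _ ξ _ ζ hx hy => ⟨ξ, ζ, hx, hy, rfl⟩

theorem IsSimulation.prodRel (hS : IsSimulation P P' S) (hT : IsSimulation Q Q' T) :
    IsSimulation (par A P Q) (par A P' Q') (prodRel S T) where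
  init := by
    obtain ⟨ξ, hξ, hμ⟩ := hS.init
    obtain ⟨ζ, hζ, hν⟩ := hT.init
    exact ⟨pprod ξ ζ, hξ.par_par hζ, hμ.prodRel hν⟩
  step := by
    rintro ⟨x, y⟩ a _ ⟨μ, ν, rfl, h⟩ _ ⟨ξ, ζ, hx, hy, rfl⟩
    rcases h with ⟨b, hb, rfl, hP, hQ⟩ | ⟨ha, hP, rfl⟩ | ⟨ha, hQ, rfl⟩
    · obtain ⟨ξ', hξ, hμ⟩ := hS.step _ _ _ hP _ hx
      obtain ⟨ζ', hζ, hν⟩ := hT.step _ _ _ hQ _ hy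
      exact ⟨pprod ξ' ζ', hξ.par_sync hb hζ, hμ.prodRel hν⟩
    · obtain ⟨ξ', hξ, hμ⟩ := hS.step _ _ _ hP _ hx
      exact ⟨pprod ξ' ζ, hξ.par_left ha, hμ.prodRel (lift_pure hy)⟩
    · obtain ⟨ζ', hζ, hν⟩ := hT.step _ _ _ hQ _ hy
      exact ⟨pprod ξ ζ', hζ.par_right ha, (lift_pure hx).prodRel hν⟩
  final := by
    rintro ⟨x, y⟩ _ ⟨hxP, hyQ⟩ ⟨ξ, ζ, hx, hy, rfl⟩
    obtain ⟨ξ', hξ, hξfinal⟩ := hS.final x ξ hxP hx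
    obtain ⟨ζ', hζ, hζfinal⟩ := hT.final y ζ hyQ hy
    refine ⟨pprod ξ' ζ', hξ.par_par hζ, fun z hz => ?_⟩
    obtain ⟨hz₁, hz₂⟩ := mem_support_pprod.1 hz
    exact ⟨hξfinal _ hz₁, hζfinal _ hz₂⟩

theorem Sim.par_mono (A : Set α) : Sim P P' → Sim Q Q' → Sim (par A P Q) (par A P' Q')
  | ⟨_, hS⟩, ⟨_, hT⟩ => ⟨_, hS.prodRel hT⟩

end Parallel

/-- parallel composition subdistributes over nondeterministic
choice: `P ∥_A Q + P ∥_A R ≤ P ∥_A (Q + R)` (the two occurrences of `P` on the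
left are disjoint copies). -/
theorem par_subdistrib_nchoice {α σ₁ σ₂ σ₃ : Type}
    (P : PAut α σ₁) (Q : PAut α σ₂) (R : PAut α σ₃)
    (E A : Set α) (hA : A ⊆ E) :
    Sim (nchoice (par A P Q) (par A P R)) (par A P (nchoice Q R)) :=
  nchoice_sim ((Sim.refl P).par_mono A (sim_nchoice_left Q R))
    ((Sim.refl P).par_mono A (sim_nchoice_right Q R))

end PCKA
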